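/- Let (X, ≤) be a poset and M : X → 𝒫(𝒫(X)) a map such that the presentation (X, ≤, M) is monotone and transitive. Then for every downset S of (X, ≤), cl(cl(S)) ⊆ cl(S), where cl(S) := {x ∈ X | ∃ D ∈ M(x), D ⊆ S}. -/

import Mathlib

/-- The refinement relation: `A ≪ B` iff every element of `A` is below some element of `B`. -/
def Refines {X : Type*} [Preorder X] (A B : Set X) : Prop :=
  ∀ a ∈ A, ∃ b ∈ B, a ≤ b

/-- A presentation `(X, ≤, M)` is monotone if whenever `y ≤ x` and `C ∈ M(x)`,
there is some `D ∈ M(y)` with `D ≪ C`. -/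
def MonotonePres {X : Type*} [Preorder X] (M : X → Set (Set X)) : Prop :=
  ∀ x y : X, y ≤ x → ∀ C ∈ M x, ∃ D ∈ M y, Refines D C

/-- A presentation `(X, ≤, M)` is transitive if for every `x`, every `C ∈ M(x)`,
and every family `{D_c | c ∈ C}` with `D_c ∈ M(c)` for each `c ∈ C`, there exists
`E ∈ M(x)` with `E ≪ ⋃_{c ∈ C} D_c`. -/
def TransitivePres {X : Type*} [Preorder X] (M : X → Set (Set X)) : Prop :=
  ∀ x : X, ∀ C ∈ M x, ∀ D : X → Set X, (∀ c ∈ C, D c ∈ M c) →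
    ∃ E ∈ M x, Refines E (⋃ c ∈ C, D c)

/-- The closure map `cl(S) := {x ∈ X | ∃ D ∈ M(x), D ⊆ S}`. -/
def clP {X : Type*} (M : X → Set (Set X)) (S : Set X) : Set X :=
  {x : X | ∃ D ∈ M x, D ⊆ S}

section Preorder

variable {X : Type*} [Preorder X]

theorem refines_iff_subset_lowerClosure {A B : Set X} :
    Refines A B ↔ A ⊆ lowerClosure B := by
  simp only [Refines, Set.subset_def, SetLike.mem_coe, mem_lowerClosure]

theorem Refines.mono_right {A B C : Set X} (hAB : Refines A B) (hBC : B ⊆ C) : Refines A C := by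
  intro a ha
  obtain ⟨b, hb, hab⟩ := hAB a ha
  exact ⟨b, hBC hb, hab⟩

theorem TransitivePres.exists_refines_of_subset_clP {M : X → Set (Set X)}
    (htrans : TransitivePres M) {x : X} {C S : Set X} (hC : C ∈ M x) (hCS : C ⊆ clP M S) :
    ∃ E ∈ M x, Refines E S := by
  have hcover : ∀ c ∈ C, ∃ D ∈ M c, D ⊆ S := fun _ hc ↦ hCS hc
  choose! D hD hDS using hcover
  obtain ⟨E, hE, hED⟩ := htrans x C hC D hD
  exact ⟨E, hE, hED.mono_right (Set.iUnion₂_subset hDS)⟩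

theorem clP_clP_subset_clP_general {M : X → Set (Set X)} (htrans : TransitivePres M)
    (S : Set X) : clP M (clP M S) ⊆ clP M (lowerClosure S) := by
  rintro x ⟨C, hC, hCS⟩
  obtain ⟨E, hE, hES⟩ := htrans.exists_refines_of_subset_clP hC hCS
  exact ⟨E, hE, refines_iff_subset_lowerClosure.mp hES⟩

end Preorder

/-- If the presentation `(X, ≤, M)` is monotone and transitive,
then `cl(cl(S)) ⊆ cl(S)` for every downset `S`. -/
theorem clP_clP_subset_clP {X : Type*} [PartialOrder X]
    (M : X → Set (Set X)) (hmono : MonotonePres M) (htrans : TransitivePres M)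
    (S : Set X) (hS : IsLowerSet S) : clP M (clP M S) ⊆ clP M S := by
  simpa only [hS.lowerClosure] using clP_clP_subset_clP_general htrans S
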